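/- Theorem 2 (determinant formula for the transformed potential): let U₁,…,U_N be as in the context with the chain Y₁ = U₁, Y_k = L_{(k−1)←0}U_k (each Y_k(x) invertible and det W(U₁,…,U_M;U_{M+1},…,U_N) ≠ 0 on the interval considered), and define F₀ = 0 and F_k = F_{k−1} + (∂Y_k)Y_k⁻¹ for k = 1,…,N. Then the entries f^N_{ij} of the matrix F_N satisfy f^N_{ij} = det W_{i,j}(U₁,…,U_M;U_{M+1},…,U_N) / det W(U₁,…,U_M;U_{M+1},…,U_N) for all i, j ∈ {1,…,n}. -/

import Mathlib

open Matrix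

noncomputable section

namespace SingularDarboux

variable {n : ℕ}

/-- Entrywise derivative `∂` of a matrix-valued function. -/
def matD (U : ℝ → Matrix (Fin n) (Fin n) ℝ) : ℝ → Matrix (Fin n) (Fin n) ℝ :=
  fun x => Matrix.of fun i j => deriv (fun t => U t i j) x

/-- The operator `D_m` acting on matrix-valued functions: it differentiates the
first `m` rows and keeps the remaining rows unchanged. -/
def matDm (m : ℕ) (U : ℝ → Matrix (Fin n) (Fin n) ℝ) : ℝ → Matrix (Fin n) (Fin n) ℝ :=
  fun x => Matrix.of fun i j => if (i : ℕ) < m then deriv (fun t => U t i j) x else U x i j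

/-- Entrywise derivative `∂` of a vector-valued function. -/
def vecD (Ψ : ℝ → Fin n → ℝ) : ℝ → Fin n → ℝ := fun x i => deriv (fun t => Ψ t i) x

/-- The operator `D_m` (equivalently `∂^{(m)}`) acting on vector-valued functions:
it differentiates the first `m` components and keeps the remaining ones unchanged. -/
def vecDm (m : ℕ) (Ψ : ℝ → Fin n → ℝ) : ℝ → Fin n → ℝ :=
  fun x i => if (i : ℕ) < m then deriv (fun t => Ψ t i) x else Ψ x i

/-- All entries of the matrix-valued function are smooth. -/
def SmoothMat (U : ℝ → Matrix (Fin n) (Fin n) ℝ) : Prop :=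
  ∀ i j, ContDiff ℝ (⊤ : ℕ∞) fun x => U x i j

/-- All components of the vector-valued function are smooth. -/
def SmoothVec (Ψ : ℝ → Fin n → ℝ) : Prop := ∀ i, ContDiff ℝ (⊤ : ℕ∞) fun x => Ψ x i

/-- `U = diag(Ũ, I_{n-m})`: outside of the top-left `m × m` block, `U` coincides with
the identity matrix. -/
def BlockDiag (m : ℕ) (U : ℝ → Matrix (Fin n) (Fin n) ℝ) : Prop :=
  ∀ (x : ℝ) (i j : Fin n), (m ≤ (i : ℕ) ∨ m ≤ (j : ℕ)) → U x i j = if i = j then 1 else 0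

/-- The `(r,k)` block (`r,k` $0$-indexed) of the matrix `W(U₁,…,U_M;U_{M+1},…,U_N)`. -/
def Wblock (m M r k : ℕ) (U : ℝ → Matrix (Fin n) (Fin n) ℝ) : ℝ → Matrix (Fin n) (Fin n) ℝ :=
  if k < M then (if r ≤ k then (matDm m)^[r] U else matD^[r] U)
  else (if r < M then (matDm m)^[r] U else matD^[r - M] ((matDm m)^[M] U))

/-- The `r`-th block of the column appended on the right in `W_j`. -/
def Wcol (m M r : ℕ) (Ψ : ℝ → Fin n → ℝ) : ℝ → Fin n → ℝ :=
  if r < M then (vecDm m)^[r] Ψ else vecD^[r - M] ((vecDm m)^[M] Ψ)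

/-- The `i`-th row of the `k`-th block of the row appended at the bottom in `W_j`
(also the replacement row used in `W_{i,j}`). -/
def Wrow (m M N k : ℕ) (U : ℝ → Matrix (Fin n) (Fin n) ℝ) (i : Fin n) : ℝ → Fin n → ℝ :=
  if k < M then (fun x => matD^[N] U x i) else (fun x => matD^[N - M] ((matDm m)^[M] U) x i)

/-- The `nN × nN` matrix `W(U₁,…,U_M;U_{M+1},…,U_N)`; rows are indexed by pairs
(block-row `r`, row `i` within the block) and similarly for columns. -/
def Wmat (m M N : ℕ) (U : ℕ → ℝ → Matrix (Fin n) (Fin n) ℝ) (x : ℝ) :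
    Matrix (Fin N × Fin n) (Fin N × Fin n) ℝ :=
  Matrix.of fun p q => Wblock m M (p.1 : ℕ) (q.1 : ℕ) (U (q.1 : ℕ)) x p.2 q.2

/-- The `(nN+1) × (nN+1)` matrix `W_j(U₁,…,U_M;U_{M+1},…,U_N,Ψ)`. -/
def WjMat (m M N : ℕ) (j : Fin n) (U : ℕ → ℝ → Matrix (Fin n) (Fin n) ℝ)
    (Ψ : ℝ → Fin n → ℝ) (x : ℝ) :
    Matrix ((Fin N × Fin n) ⊕ Unit) ((Fin N × Fin n) ⊕ Unit) ℝ :=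
  Matrix.of fun p q =>
    match p, q with
    | Sum.inl p, Sum.inl q => Wblock m M (p.1 : ℕ) (q.1 : ℕ) (U (q.1 : ℕ)) x p.2 q.2
    | Sum.inl p, Sum.inr _ => Wcol m M (p.1 : ℕ) Ψ x p.2
    | Sum.inr _, Sum.inl q => Wrow m M N (q.1 : ℕ) (U (q.1 : ℕ)) j x q.2
    | Sum.inr _, Sum.inr _ => vecD^[N - M] ((vecDm m)^[M] Ψ) x j

/-- The `nN × nN` matrix `W_{i,j}(U₁,…,U_M;U_{M+1},…,U_N)`: in the last block-row
(`r = N-1`) of `W` the `j`-th row of each block is replaced as prescribed. -/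
def WijMat (m M N : ℕ) (i j : Fin n) (U : ℕ → ℝ → Matrix (Fin n) (Fin n) ℝ) (x : ℝ) :
    Matrix (Fin N × Fin n) (Fin N × Fin n) ℝ :=
  Matrix.of fun p q =>
    if (p.1 : ℕ) = N - 1 ∧ p.2 = j then Wrow m M N (q.1 : ℕ) (U (q.1 : ℕ)) i x q.2
    else Wblock m M (p.1 : ℕ) (q.1 : ℕ) (U (q.1 : ℕ)) x p.2 q.2


/-- A single Darboux transformation step acting on matrix-valued functions:
`D_m Z - (∂Y)Y⁻¹ Z` if `sing = true` (singular step) and `∂Z - (∂Y)Y⁻¹ Z` otherwise. -/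
def LstepM (m : ℕ) (sing : Bool) (Y Z : ℝ → Matrix (Fin n) (Fin n) ℝ) :
    ℝ → Matrix (Fin n) (Fin n) ℝ :=
  fun x => (if sing then matDm m Z x else matD Z x) - matD Y x * (Y x)⁻¹ * Z x

/-- A single Darboux transformation step acting on vector-valued functions. -/
def LstepV (m : ℕ) (sing : Bool) (Y : ℝ → Matrix (Fin n) (Fin n) ℝ) (Ψ : ℝ → Fin n → ℝ) :
    ℝ → Fin n → ℝ :=
  fun x => (if sing then vecDm m Ψ x else vecD Ψ x) - (matD Y x * (Y x)⁻¹).mulVec (Ψ x)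

/-- `chainM m M U k Z = L_{k←0} Z`, the result of the first `k` transformation steps
applied to the matrix-valued function `Z`; the step of (0-indexed) number `s` is the
singular operator `L^{(m)} = D_m - (∂Y)Y⁻¹` when `s < M` and the regular operator
`∂ - (∂Y)Y⁻¹` otherwise, with transformation matrix `Y_{s+1} = chainM m M U s (U s)`
(so that `Y₁ = U 0`, the 0-indexed `U₁`). -/
def chainM (m M : ℕ) (U : ℕ → ℝ → Matrix (Fin n) (Fin n) ℝ) :
    ℕ → (ℝ → Matrix (Fin n) (Fin n) ℝ) → ℝ → Matrix (Fin n) (Fin n) ℝ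
  | 0, Z => Z
  | s + 1, Z => LstepM m (decide (s < M)) (chainM m M U s (U s)) (chainM m M U s Z)

/-- `chainV m M U k Ψ = L_{k←0} Ψ` for a vector-valued function `Ψ`. -/
def chainV (m M : ℕ) (U : ℕ → ℝ → Matrix (Fin n) (Fin n) ℝ) :
    ℕ → (ℝ → Fin n → ℝ) → ℝ → Fin n → ℝ
  | 0, Ψ => Ψ
  | s + 1, Ψ => LstepV m (decide (s < M)) (chainM m M U s (U s)) (chainV m M U s Ψ)

/-- `F_k`: `F_0 = 0` and `F_k = F_{k-1} + (∂Y_k)Y_k⁻¹` with `Y_k = L_{(k-1)←0} U_k`. -/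
def chainF (m M : ℕ) (U : ℕ → ℝ → Matrix (Fin n) (Fin n) ℝ) :
    ℕ → ℝ → Matrix (Fin n) (Fin n) ℝ
  | 0 => fun _ => 0
  | s + 1 => fun x =>
      chainF m M U s x + matD (chainM m M U s (U s)) x * (chainM m M U s (U s) x)⁻¹

/-!
The operator `L_{N←0}` expands as `∑_{r ≤ N} B_r G_r`, where `G_r = D_m ^ r` for `r ≤ M`,
`G_r = ∂ ^ (r - M) D_m ^ M` for `r ≥ M`, `B_N = 1` and `B_{N-1} = -F_N`. The Leibniz rule needed to
move `D_m` past the coefficients holds because the singular steps have potentials of the form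
`diag(Ã, 0)`. Since `L_{N←0}` annihilates `U_k`, the coefficients satisfy `∑_r B_r W_{r,k} = 0`,
where `W_{N,k}` is the continuation of the block column `W_{·,k}` by one more row. (For `k ≤ M`
the last `n - m` columns of `U_k` are not annihilated; there the identity holds because `B_r` has
vanishing last columns for `r < M`.) Hence the replacement row in `W_{i,j}` is a combination of the
rows of `W`, in which the replaced row has coefficient `f^N_{ij}`.
-/

/-! ### Matrix-valued functions smooth on a set -/

/-- Smoothness of all entries of a matrix-valued function on a set `I`; the local counterpart of
`SmoothMat`. -/
def SmoothMatOn (Z : ℝ → Matrix (Fin n) (Fin n) ℝ) (I : Set ℝ) : Prop :=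
  ∀ i j, ContDiffOn ℝ (⊤ : ℕ∞) (fun x => Z x i j) I

section Calculus

variable {m : ℕ} {I : Set ℝ} {Y Z : ℝ → Matrix (Fin n) (Fin n) ℝ}

lemma matD_apply (Z : ℝ → Matrix (Fin n) (Fin n) ℝ) (x : ℝ) (i j : Fin n) :
    matD Z x i j = deriv (fun t => Z t i j) x := rfl

lemma matDm_apply (m : ℕ) (Z : ℝ → Matrix (Fin n) (Fin n) ℝ) (x : ℝ) (i j : Fin n) :
    matDm m Z x i j = if (i : ℕ) < m then matD Z x i j else Z x i j := rfl

lemma SmoothMat.smoothMatOn (hZ : SmoothMat Z) : SmoothMatOn Z I :=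
  fun i j => (hZ i j).contDiffOn

lemma smoothMatOn_const (c : Matrix (Fin n) (Fin n) ℝ) : SmoothMatOn (fun _ => c) I :=
  fun _ _ => contDiffOn_const

lemma SmoothMatOn.add (hY : SmoothMatOn Y I) (hZ : SmoothMatOn Z I) : SmoothMatOn (Y + Z) I :=
  fun i j => (hY i j).add (hZ i j)

lemma SmoothMatOn.sub (hY : SmoothMatOn Y I) (hZ : SmoothMatOn Z I) : SmoothMatOn (Y - Z) I :=
  fun i j => (hY i j).sub (hZ i j)

lemma SmoothMatOn.mul (hY : SmoothMatOn Y I) (hZ : SmoothMatOn Z I) : SmoothMatOn (Y * Z) I := by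
  intro i j
  simp only [Pi.mul_apply, Matrix.mul_apply]
  exact ContDiffOn.sum fun l _ => (hY i l).mul (hZ l j)

lemma SmoothMatOn.contDiffOn_det (hZ : SmoothMatOn Z I) :
    ContDiffOn ℝ (⊤ : ℕ∞) (fun x => (Z x).det) I := by
  simp only [Matrix.det_apply']
  exact ContDiffOn.sum fun σ _ =>
    contDiffOn_const.mul (contDiffOn_prod fun l _ => hZ (σ l) l)

lemma SmoothMatOn.adjugate (hZ : SmoothMatOn Z I) : SmoothMatOn (fun x => (Z x).adjugate) I := by
  intro i j
  simp only [Matrix.adjugate_apply]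
  refine SmoothMatOn.contDiffOn_det (Z := fun x => (Z x).updateRow j (Pi.single i 1)) fun k l => ?_
  obtain rfl | hk := eq_or_ne k j
  · simpa only [Matrix.updateRow_self] using contDiffOn_const
  · simpa only [Matrix.updateRow_ne hk] using hZ k l

lemma SmoothMatOn.inv (hZ : SmoothMatOn Z I) (hdet : ∀ x ∈ I, (Z x).det ≠ 0) :
    SmoothMatOn (fun x => (Z x)⁻¹) I := by
  intro i j
  simpa [Matrix.inv_def, Ring.inverse_eq_inv'] using
    (hZ.contDiffOn_det.inv hdet).mul (hZ.adjugate i j)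

lemma SmoothMatOn.matD (hI : IsOpen I) (hZ : SmoothMatOn Z I) : SmoothMatOn (matD Z) I :=
  fun i j => (hZ i j).deriv_of_isOpen (m := (⊤ : ℕ∞)) hI (by simp)

lemma SmoothMatOn.matDm (hI : IsOpen I) (hZ : SmoothMatOn Z I) : SmoothMatOn (matDm m Z) I := by
  intro i j
  by_cases hi : (i : ℕ) < m
  · simpa only [matDm_apply, if_pos hi] using hZ.matD hI i j
  · simpa only [matDm_apply, if_neg hi] using hZ i j

lemma SmoothMatOn.differentiableAt (hI : IsOpen I) (hZ : SmoothMatOn Z I) {x : ℝ} (hx : x ∈ I)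
    (i j : Fin n) : DifferentiableAt ℝ (fun t => Z t i j) x :=
  ((hZ i j).contDiffAt (hI.mem_nhds hx)).differentiableAt (by simp)

lemma matD_zero : matD (0 : ℝ → Matrix (Fin n) (Fin n) ℝ) = 0 := by
  ext x i j
  simp [matD_apply]

lemma matD_one : matD (1 : ℝ → Matrix (Fin n) (Fin n) ℝ) = 0 := by
  ext x i j
  simp [matD_apply]

lemma matD_apply_eq_zero (hI : IsOpen I) {i j : Fin n} {c : ℝ} (h : ∀ x ∈ I, Z x i j = c)
    {x : ℝ} (hx : x ∈ I) : matD Z x i j = 0 :=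
  ((show Set.EqOn (fun t => Z t i j) (fun _ => c) I from h).deriv hI hx).trans (deriv_const x c)

lemma matD_eqOn (hI : IsOpen I) (h : Set.EqOn Y Z I) : Set.EqOn (matD Y) (matD Z) I := by
  intro x hx
  ext i j
  exact Set.EqOn.deriv (fun t ht => by rw [h ht]) hI hx

lemma matD_mul (hI : IsOpen I) (hY : SmoothMatOn Y I) (hZ : SmoothMatOn Z I) {x : ℝ}
    (hx : x ∈ I) : matD (Y * Z) x = matD Y x * Z x + Y x * matD Z x := by
  have hYd := hY.differentiableAt hI hx
  have hZd := hZ.differentiableAt hI hx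
  ext i j
  simp only [matD_apply, Pi.mul_apply, Matrix.mul_apply, Matrix.add_apply]
  rw [deriv_fun_sum fun l _ => (hYd i l).fun_mul (hZd l j), ← Finset.sum_add_distrib]
  exact Finset.sum_congr rfl fun l _ => deriv_fun_mul (hYd i l) (hZd l j)

lemma matD_sum (hI : IsOpen I) {ι : Type*} {t : Finset ι}
    {F : ι → ℝ → Matrix (Fin n) (Fin n) ℝ} (hF : ∀ r ∈ t, SmoothMatOn (F r) I) {x : ℝ}
    (hx : x ∈ I) : matD (∑ r ∈ t, F r) x = ∑ r ∈ t, matD (F r) x := by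
  ext i j
  simp only [matD_apply, Finset.sum_apply, Matrix.sum_apply]
  exact deriv_fun_sum fun r hr => (hF r hr).differentiableAt hI hx i j

lemma matD_iterate_apply (r : ℕ) (Z : ℝ → Matrix (Fin n) (Fin n) ℝ) (x : ℝ) (i j : Fin n) :
    matD^[r] Z x i j = iteratedDeriv r (fun t => Z t i j) x := by
  induction r generalizing x with
  | zero => rfl
  | succ r ih => simp only [Function.iterate_succ_apply', matD_apply, ih, iteratedDeriv_succ]

lemma matDm_iterate_apply (m r : ℕ) (Z : ℝ → Matrix (Fin n) (Fin n) ℝ) (x : ℝ) (i j : Fin n) :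
    (matDm m)^[r] Z x i j =
      if (i : ℕ) < m then iteratedDeriv r (fun t => Z t i j) x else Z x i j := by
  induction r generalizing x with
  | zero => simp
  | succ r ih =>
    rw [Function.iterate_succ_apply', matDm_apply, matD_apply]
    simp only [ih]
    split_ifs
    · rw [iteratedDeriv_succ]
    · rfl

lemma iteratedDeriv_eq_of_eqOn_const (hI : IsOpen I) {f : ℝ → ℝ} {c : ℝ}
    (h : ∀ x ∈ I, f x = c) (r : ℕ) {x : ℝ} (hx : x ∈ I) :
    iteratedDeriv r f x = if r = 0 then c else 0 :=
  ((show Set.EqOn f (fun _ => c) I from h).iteratedDeriv_of_isOpen hI r hx).trans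
    iteratedDeriv_const

end Calculus

/-! ### Matrices supported in the leading block -/

section Corner

variable {R : Type*} [Ring R] {m : ℕ}

/-- The left ideal of matrices supported in the first `m` columns. These are the matrices that
cannot distinguish `D_m` from `∂` when multiplying from the left. -/
def leftColumns (m : ℕ) : Ideal (Matrix (Fin n) (Fin n) R) where
  carrier := {A | ∀ i j : Fin n, m ≤ (j : ℕ) → A i j = 0}
  zero_mem' _ _ _ := rfl
  add_mem' hA hB i j hj := by rw [Matrix.add_apply, hA i j hj, hB i j hj, add_zero]
  smul_mem' B A hA i j hj := by
    rw [smul_eq_mul, Matrix.mul_apply]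
    exact Finset.sum_eq_zero fun l _ => by rw [hA l j hj, mul_zero]

/-- The non-unital ring `diag(Ã, 0)` of matrices supported in the top-left `m × m` block. -/
def corner (m : ℕ) : NonUnitalSubring (Matrix (Fin n) (Fin n) R) where
  carrier := {A | ∀ i j : Fin n, m ≤ (i : ℕ) ∨ m ≤ (j : ℕ) → A i j = 0}
  zero_mem' _ _ _ := rfl
  add_mem' hA hB i j hij := by rw [Matrix.add_apply, hA i j hij, hB i j hij, add_zero]
  neg_mem' hA i j hij := by rw [Matrix.neg_apply, hA i j hij, neg_zero]
  mul_mem' {A B} hA hB i j hij := by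
    rw [Matrix.mul_apply]
    refine Finset.sum_eq_zero fun l _ => hij.elim (fun hi => ?_) fun hj => ?_
    · rw [hA i l (Or.inl hi), zero_mul]
    · rw [hB l j (Or.inr hj), mul_zero]

lemma mem_leftColumns_of_mem_corner {A : Matrix (Fin n) (Fin n) R} (hA : A ∈ corner m) :
    A ∈ leftColumns m :=
  fun i j hj => hA i j (Or.inr hj)

lemma mul_apply_eq_zero_of_mem_corner {A : Matrix (Fin n) (Fin n) R} (hA : A ∈ corner m)
    (B : Matrix (Fin n) (Fin n) R) {i : Fin n} (hi : m ≤ (i : ℕ)) (j : Fin n) :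
    (A * B) i j = 0 := by
  rw [Matrix.mul_apply]
  exact Finset.sum_eq_zero fun l _ => by rw [hA i l (Or.inl hi), zero_mul]

lemma mul_mem_corner_of_mem_leftColumns {A B : Matrix (Fin n) (Fin n) R} (hA : A ∈ corner m)
    (hAB : A * B ∈ leftColumns m) : A * B ∈ corner m := by
  rintro i j (hi | hj)
  · exact mul_apply_eq_zero_of_mem_corner hA B hi j
  · exact hAB i j hj

end Corner

section CornerCalculus

variable {m : ℕ} {I : Set ℝ} {Y Z : ℝ → Matrix (Fin n) (Fin n) ℝ}

lemma matD_mem_leftColumns (hI : IsOpen I) (hZ : ∀ x ∈ I, Z x ∈ leftColumns m) :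
    ∀ x ∈ I, matD Z x ∈ leftColumns m :=
  fun _ hx i j hj => matD_apply_eq_zero hI (fun t ht => hZ t ht i j hj) hx

lemma matD_mem_corner (hI : IsOpen I) (hZ : ∀ x ∈ I, Z x ∈ corner m) :
    ∀ x ∈ I, matD Z x ∈ corner m :=
  fun _ hx i j hij => matD_apply_eq_zero hI (fun t ht => hZ t ht i j hij) hx

lemma mul_matDm_of_mem_leftColumns {B : Matrix (Fin n) (Fin n) ℝ} (hB : B ∈ leftColumns m)
    (Z : ℝ → Matrix (Fin n) (Fin n) ℝ) (x : ℝ) : B * matDm m Z x = B * matD Z x := by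
  ext i j
  simp only [Matrix.mul_apply, matDm_apply]
  refine Finset.sum_congr rfl fun l _ => ?_
  split_ifs with hl
  · rfl
  · rw [hB i l (not_lt.mp hl), zero_mul, zero_mul]

lemma matDm_eqOn_matD (hI : IsOpen I)
    (hZ : ∀ x ∈ I, ∀ i j : Fin n, m ≤ (i : ℕ) → Z x i j = 0) :
    Set.EqOn (matDm m Z) (matD Z) I := by
  intro x hx
  ext i j
  rw [matDm_apply]
  split_ifs with hi
  · rfl
  · rw [matD_apply_eq_zero hI (fun t ht => hZ t ht i j (not_lt.mp hi)) hx,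
      hZ x hx i j (not_lt.mp hi)]

/-- The local counterpart of `BlockDiag`: `U = diag(Ũ, I_{n-m})` on the set `I`. -/
def BlockDiagOn (m : ℕ) (U : ℝ → Matrix (Fin n) (Fin n) ℝ) (I : Set ℝ) : Prop :=
  ∀ x ∈ I, U x - 1 ∈ corner m

lemma BlockDiag.blockDiagOn (hZ : BlockDiag m Z) : BlockDiagOn m Z I := by
  intro x _ i j hij
  rw [Matrix.sub_apply, hZ x i j hij, Matrix.one_apply, sub_self]

lemma BlockDiagOn.apply (hZ : BlockDiagOn m Z I) {x : ℝ} (hx : x ∈ I) {i j : Fin n}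
    (hij : m ≤ (i : ℕ) ∨ m ≤ (j : ℕ)) : Z x i j = if i = j then 1 else 0 := by
  simpa only [Matrix.one_apply] using sub_eq_zero.mp (hZ x hx i j hij)

lemma BlockDiagOn.matD_mem_corner (hI : IsOpen I) (hZ : BlockDiagOn m Z I) :
    ∀ x ∈ I, matD Z x ∈ corner m :=
  fun _ hx _ _ hij => matD_apply_eq_zero hI (fun _ ht => hZ.apply ht hij) hx

lemma BlockDiagOn.matDm (hI : IsOpen I) (hZ : BlockDiagOn m Z I) :
    BlockDiagOn m (matDm m Z) I := by
  intro x hx i j hij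
  rw [Matrix.sub_apply, matDm_apply]
  split_ifs with hi
  · have hne : i ≠ j := by rintro rfl; omega
    rw [hZ.matD_mem_corner hI x hx i j hij, Matrix.one_apply_ne hne, sub_zero]
  · exact hZ x hx i j hij

lemma BlockDiagOn.matDm_apply_eq_matD (hI : IsOpen I) (hZ : BlockDiagOn m Z I) {x : ℝ}
    (hx : x ∈ I) (i : Fin n) {j : Fin n} (hj : (j : ℕ) < m) :
    SingularDarboux.matDm m Z x i j = SingularDarboux.matD Z x i j := by
  rw [matDm_apply]
  split_ifs with hi
  · rfl
  · have hne : i ≠ j := by rintro rfl; omega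
    rw [hZ.matD_mem_corner hI x hx i j (by omega), hZ.apply hx (by omega), if_neg hne]

/-- The logarithmic derivative `(∂Y)Y⁻¹`. -/
def matLogD (Y : ℝ → Matrix (Fin n) (Fin n) ℝ) : ℝ → Matrix (Fin n) (Fin n) ℝ :=
  fun x => matD Y x * (Y x)⁻¹

lemma matLogD_mul_self {x : ℝ} (hdet : (Y x).det ≠ 0) : matLogD Y x * Y x = matD Y x :=
  Matrix.nonsing_inv_mul_cancel_right _ _ hdet.isUnit

lemma SmoothMatOn.matLogD (hI : IsOpen I) (hY : SmoothMatOn Y I)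
    (hdet : ∀ x ∈ I, (Y x).det ≠ 0) : SmoothMatOn (matLogD Y) I :=
  (hY.matD hI).mul (hY.inv hdet)

lemma BlockDiagOn.matLogD_mem_corner (hI : IsOpen I) (hY : BlockDiagOn m Y I)
    (hdet : ∀ x ∈ I, (Y x).det ≠ 0) : ∀ x ∈ I, matLogD Y x ∈ corner m := by
  intro x hx
  have hD := hY.matD_mem_corner hI x hx
  have hL : matLogD Y x = matD Y x - matLogD Y x * (Y x - 1) := by
    rw [mul_sub, mul_one, matLogD_mul_self (hdet x hx), sub_sub_cancel]
  refine mul_mem_corner_of_mem_leftColumns hD ?_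
  change matLogD Y x ∈ leftColumns m
  rw [hL]
  exact sub_mem (mem_leftColumns_of_mem_corner hD)
    (Ideal.mul_mem_left _ _ (mem_leftColumns_of_mem_corner (hY x hx)))

end CornerCalculus

/-! ### Mixed derivatives -/

/-- The derivation part of the `s`-th transformation step: `D_m` for `s < M`, and `∂` afterwards. -/
def stepD (m M s : ℕ) (Z : ℝ → Matrix (Fin n) (Fin n) ℝ) : ℝ → Matrix (Fin n) (Fin n) ℝ :=
  if s < M then matDm m Z else matD Z

/-- The composite of the first `r` operators `stepD`, that is `D_m ^ r` for `r ≤ M` and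
`∂ ^ (r - M) D_m ^ M` for `r ≥ M`. -/
def mixedD (m M r : ℕ) (Z : ℝ → Matrix (Fin n) (Fin n) ℝ) : ℝ → Matrix (Fin n) (Fin n) ℝ :=
  matD^[r - M] ((matDm m)^[min r M] Z)

section MixedDerivative

variable {m M : ℕ} {I : Set ℝ} {Y Z : ℝ → Matrix (Fin n) (Fin n) ℝ}

lemma stepD_apply (m M s : ℕ) (Z : ℝ → Matrix (Fin n) (Fin n) ℝ) (x : ℝ) (i j : Fin n) :
    stepD m M s Z x i j = if s < M ∧ m ≤ (i : ℕ) then Z x i j else matD Z x i j := by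
  rw [stepD]
  split_ifs with hs hi hi
  · rw [matDm_apply, if_neg (by omega)]
  · rw [matDm_apply, if_pos (by omega)]
  · omega
  · rfl

lemma SmoothMatOn.stepD (hI : IsOpen I) (hZ : SmoothMatOn Z I) (s : ℕ) :
    SmoothMatOn (stepD m M s Z) I := by
  rw [SingularDarboux.stepD]
  split_ifs
  exacts [hZ.matDm hI, hZ.matD hI]

lemma stepD_eqOn (hI : IsOpen I) (s : ℕ) (h : Set.EqOn Y Z I) :
    Set.EqOn (stepD m M s Y) (stepD m M s Z) I := by
  intro x hx
  ext i j
  rw [stepD_apply, stepD_apply, h hx, matD_eqOn hI h hx]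

lemma stepD_sum (hI : IsOpen I) (s : ℕ) {ι : Type*} {t : Finset ι}
    {F : ι → ℝ → Matrix (Fin n) (Fin n) ℝ} (hF : ∀ r ∈ t, SmoothMatOn (F r) I) {x : ℝ}
    (hx : x ∈ I) : stepD m M s (∑ r ∈ t, F r) x = ∑ r ∈ t, stepD m M s (F r) x := by
  ext i j
  rw [stepD_apply, matD_sum hI hF hx]
  simp only [Finset.sum_apply, Matrix.sum_apply, stepD_apply]
  split_ifs <;> rfl

lemma mixedD_zero (m M : ℕ) (Z : ℝ → Matrix (Fin n) (Fin n) ℝ) : mixedD m M 0 Z = Z := by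
  simp [mixedD]

lemma mixedD_succ (m M r : ℕ) (Z : ℝ → Matrix (Fin n) (Fin n) ℝ) :
    mixedD m M (r + 1) Z = stepD m M r (mixedD m M r Z) := by
  rw [stepD, mixedD, mixedD]
  split_ifs with hr
  · rw [Nat.sub_eq_zero_of_le hr, Nat.sub_eq_zero_of_le hr.le, min_eq_left hr,
      min_eq_left hr.le, Function.iterate_zero_apply, Function.iterate_zero_apply,
      Function.iterate_succ_apply']
  · rw [not_lt] at hr
    rw [Nat.succ_sub hr, min_eq_right hr, min_eq_right (hr.trans r.le_succ),
      Function.iterate_succ_apply']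

lemma mixedD_apply (m M r : ℕ) (Z : ℝ → Matrix (Fin n) (Fin n) ℝ) (x : ℝ) (i j : Fin n) :
    mixedD m M r Z x i j = if (i : ℕ) < m then iteratedDeriv r (fun t => Z t i j) x
      else iteratedDeriv (r - M) (fun t => Z t i j) x := by
  rw [mixedD, matD_iterate_apply]
  simp only [matDm_iterate_apply]
  split_ifs
  · simp only [iteratedDeriv_eq_iterate, ← Function.iterate_add_apply]
    rw [Nat.sub_add_min_cancel]
  · rfl

lemma SmoothMatOn.mixedD (hI : IsOpen I) (hZ : SmoothMatOn Z I) (r : ℕ) :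
    SmoothMatOn (mixedD m M r Z) I := by
  induction r with
  | zero => rwa [mixedD_zero]
  | succ r ih =>
    rw [mixedD_succ]
    exact ih.stepD hI r

lemma Wblock_eq_mixedD {k : ℕ} (hk : M ≤ k) (r : ℕ) (Z : ℝ → Matrix (Fin n) (Fin n) ℝ) :
    Wblock m M r k Z = mixedD m M r Z := by
  rw [Wblock, if_neg (not_lt.mpr hk), mixedD]
  split_ifs with hr
  · rw [min_eq_left hr.le, Nat.sub_eq_zero_of_le hr.le, Function.iterate_zero_apply]
  · rw [min_eq_right (not_lt.mp hr)]

lemma BlockDiagOn.Wblock_apply_eq_mixedD (hI : IsOpen I) (hZ : BlockDiagOn m Z I) {k : ℕ}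
    (hk : k < M) (r : ℕ) {x : ℝ} (hx : x ∈ I) (i : Fin n) {j : Fin n} (hj : (j : ℕ) < m) :
    Wblock m M r k Z x i j = mixedD m M r Z x i j := by
  have hlow (hi : ¬ (i : ℕ) < m) : ∀ t ∈ I, Z t i j = 0 := fun t ht => by
    rw [hZ.apply ht (by omega), if_neg (by rintro rfl; omega)]
  rw [Wblock, if_pos hk, mixedD_apply]
  split_ifs with hr hi hi
  · rw [matDm_iterate_apply, if_pos hi]
  · rw [matDm_iterate_apply, if_neg hi, iteratedDeriv_eq_of_eqOn_const hI (hlow hi) _ hx,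
      hlow hi x hx, ite_self]
  · rw [matD_iterate_apply]
  · rw [matD_iterate_apply, iteratedDeriv_eq_of_eqOn_const hI (hlow hi) _ hx,
      iteratedDeriv_eq_of_eqOn_const hI (hlow hi) _ hx, ite_self, ite_self]

lemma BlockDiagOn.Wblock_apply_of_le (hI : IsOpen I) (hZ : BlockDiagOn m Z I) {k : ℕ}
    (hk : k < M) (r : ℕ) {x : ℝ} (hx : x ∈ I) (i : Fin n) {j : Fin n} (hj : m ≤ (j : ℕ)) :
    Wblock m M r k Z x i j = if r ≤ k ∧ i = j then 1 else 0 := by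
  have hconst : ∀ t ∈ I, Z t i j = if i = j then 1 else 0 := fun t ht => hZ.apply ht (Or.inr hj)
  rw [Wblock, if_pos hk]
  by_cases hr : r ≤ k
  · rw [if_pos hr, matDm_iterate_apply, iteratedDeriv_eq_of_eqOn_const hI hconst r hx,
      hconst x hx]
    by_cases hij : i = j
    · simp [hij, hr, not_lt.mpr hj]
    · simp [hij]
  · rw [if_neg hr, matD_iterate_apply, iteratedDeriv_eq_of_eqOn_const hI hconst r hx,
      if_neg (by omega), if_neg (by tauto)]

end MixedDerivative

/-! ### Expansion of a product of first-order factors -/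

/-- The product `(E_{s-1} - A_{s-1}) ⋯ (E_0 - A_0)` applied to `Z`, where `E_k = stepD m M k`, for
arbitrary potentials `A`; `chainM` is the case in which `A_k` is the logarithmic derivative of the
`k`-th transformation matrix. -/
def dressing (m M : ℕ) (A : ℕ → ℝ → Matrix (Fin n) (Fin n) ℝ) :
    ℕ → (ℝ → Matrix (Fin n) (Fin n) ℝ) → ℝ → Matrix (Fin n) (Fin n) ℝ
  | 0, Z => Z
  | s + 1, Z => stepD m M s (dressing m M A s Z) - A s * dressing m M A s Z

/-- `dressingCoeff A s r` is the coefficient of `mixedD m M r` in the expansion of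
`dressing m M A s`. The recursion is the one for a product of factors `∂ - A_k`, and thus involves
neither `m` nor `M`. -/
def dressingCoeff (A : ℕ → ℝ → Matrix (Fin n) (Fin n) ℝ) :
    ℕ → ℕ → ℝ → Matrix (Fin n) (Fin n) ℝ
  | 0, r => if r = 0 then 1 else 0
  | s + 1, 0 => matD (dressingCoeff A s 0) - A s * dressingCoeff A s 0
  | s + 1, r + 1 => dressingCoeff A s r +
      (matD (dressingCoeff A s (r + 1)) - A s * dressingCoeff A s (r + 1))

section Dressing

variable {m M s : ℕ} {I : Set ℝ} {A : ℕ → ℝ → Matrix (Fin n) (Fin n) ℝ}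
  {Z : ℝ → Matrix (Fin n) (Fin n) ℝ}

lemma SmoothMatOn.dressing (hI : IsOpen I) (hA : ∀ k < s, SmoothMatOn (A k) I)
    (hZ : SmoothMatOn Z I) : SmoothMatOn (dressing m M A s Z) I := by
  induction s with
  | zero => exact hZ
  | succ s ih =>
    have ih := ih fun k hk => hA k (hk.trans s.lt_succ_self)
    exact (ih.stepD hI s).sub ((hA s s.lt_succ_self).mul ih)

lemma BlockDiagOn.dressing (hI : IsOpen I) (hs : s ≤ M)
    (hA : ∀ k < s, ∀ x ∈ I, A k x ∈ corner m) (hZ : BlockDiagOn m Z I) :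
    BlockDiagOn m (dressing m M A s Z) I := by
  induction s with
  | zero => exact hZ
  | succ s ih =>
    have ih := ih (Nat.le_of_succ_le hs) fun k hk => hA k (hk.trans s.lt_succ_self)
    intro x hx
    have hAx := hA s s.lt_succ_self x hx
    have hsplit : SingularDarboux.dressing m M A (s + 1) Z x - 1 =
        (SingularDarboux.matDm m (SingularDarboux.dressing m M A s Z) x - 1) -
          (A s x + A s x * (SingularDarboux.dressing m M A s Z x - 1)) := by
      rw [SingularDarboux.dressing, stepD, if_pos (Nat.lt_of_succ_le hs), mul_sub,
        mul_one, add_sub_cancel, Pi.sub_apply, Pi.mul_apply, sub_right_comm]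
    rw [hsplit]
    exact sub_mem (ih.matDm hI x hx) (add_mem hAx (mul_mem hAx (ih x hx)))

lemma dressing_apply_eq_zero_of_le (hI : IsOpen I) {t : ℕ} (hst : s ≤ t) {j : Fin n}
    (h : ∀ x ∈ I, ∀ i, dressing m M A s Z x i j = 0) :
    ∀ x ∈ I, ∀ i, dressing m M A t Z x i j = 0 := by
  induction t, hst using Nat.le_induction with
  | base => exact h
  | succ t _ ih =>
    intro x hx i
    have hmul : (A t x * dressing m M A t Z x) i j = 0 := by
      rw [Matrix.mul_apply]
      exact Finset.sum_eq_zero fun l _ => by rw [ih x hx l, mul_zero]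
    rw [dressing, Pi.sub_apply, Matrix.sub_apply, Pi.mul_apply, hmul, sub_zero, stepD_apply,
      ih x hx i, matD_apply_eq_zero hI (fun t ht => ih t ht i) hx, ite_self]

lemma dressingCoeff_of_lt {r : ℕ} (h : s < r) : dressingCoeff A s r = 0 := by
  induction s generalizing r with
  | zero => rw [dressingCoeff, if_neg (Nat.pos_iff_ne_zero.mp h)]
  | succ s ih =>
    obtain ⟨r, rfl⟩ := Nat.exists_eq_succ_of_ne_zero (Nat.ne_zero_of_lt h)
    rw [dressingCoeff, ih (Nat.lt_of_succ_lt_succ h), ih (Nat.lt_of_succ_lt h), mul_zero,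
      sub_zero, zero_add, matD_zero]

lemma dressingCoeff_self (A : ℕ → ℝ → Matrix (Fin n) (Fin n) ℝ) (s : ℕ) :
    dressingCoeff A s s = 1 := by
  induction s with
  | zero => rfl
  | succ s ih =>
    rw [dressingCoeff, ih, dressingCoeff_of_lt s.lt_succ_self, mul_zero, sub_zero, matD_zero,
      add_zero]

lemma dressingCoeff_succ_self (A : ℕ → ℝ → Matrix (Fin n) (Fin n) ℝ) (s : ℕ) :
    dressingCoeff A (s + 1) s = -∑ k ∈ Finset.range (s + 1), A k := by
  induction s with
  | zero => rw [dressingCoeff, dressingCoeff_self, matD_one, mul_one, zero_sub,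
      Finset.sum_range_one]
  | succ s ih =>
    rw [dressingCoeff, ih, dressingCoeff_self, matD_one, mul_one, zero_sub,
      Finset.sum_range_succ _ (s + 1), neg_add]

lemma smoothMatOn_dressingCoeff (hI : IsOpen I) (hA : ∀ k < s, SmoothMatOn (A k) I) (r : ℕ) :
    SmoothMatOn (dressingCoeff A s r) I := by
  induction s generalizing r with
  | zero =>
    rw [dressingCoeff]
    split_ifs
    exacts [smoothMatOn_const 1, smoothMatOn_const 0]
  | succ s ih =>
    have ih := ih fun k hk => hA k (hk.trans s.lt_succ_self)
    have hstep (r : ℕ) : SmoothMatOn (matD (dressingCoeff A s r) - A s * dressingCoeff A s r) I :=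
      ((ih r).matD hI).sub ((hA s s.lt_succ_self).mul (ih r))
    cases r with
    | zero => exact hstep 0
    | succ r => exact (ih r).add (hstep (r + 1))

lemma dressingCoeff_mem {S : AddSubgroup (Matrix (Fin n) (Fin n) ℝ)}
    (hD : ∀ Y : ℝ → Matrix (Fin n) (Fin n) ℝ, (∀ x ∈ I, Y x ∈ S) → ∀ x ∈ I, matD Y x ∈ S)
    (hmul : ∀ k < s, ∀ x ∈ I, ∀ B ∈ S, A k x * B ∈ S) {r : ℕ} (hr : r < s)
    (hA : ∀ k ≤ r, ∀ x ∈ I, A k x ∈ S) : ∀ x ∈ I, dressingCoeff A s r x ∈ S := by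
  induction s generalizing r with
  | zero => omega
  | succ s ih =>
    have ih {q : ℕ} := ih (r := q) fun k hk => hmul k (hk.trans s.lt_succ_self)
    have hstep : ∀ x ∈ I, (matD (dressingCoeff A s r) - A s * dressingCoeff A s r) x ∈ S := by
      intro x hx
      obtain rfl | hrs := (Nat.le_of_lt_succ hr).eq_or_lt
      · rw [dressingCoeff_self, matD_one, mul_one, zero_sub]
        exact neg_mem (hA r le_rfl x hx)
      · have hr := ih hrs hA
        exact sub_mem (hD _ hr x hx) (hmul s s.lt_succ_self x hx _ (hr x hx))
    intro x hx
    cases r with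
    | zero => exact hstep x hx
    | succ r =>
      exact add_mem (ih (by omega) (fun k hk => hA k (hk.trans r.le_succ)) x hx) (hstep x hx)

lemma dressingCoeff_mem_corner (hI : IsOpen I) (hA : ∀ k < s, ∀ x ∈ I, A k x ∈ corner m)
    {r : ℕ} (hr : r < s) : ∀ x ∈ I, dressingCoeff A s r x ∈ corner m :=
  dressingCoeff_mem (S := (corner m).toAddSubgroup) (fun _ => matD_mem_corner hI)
    (fun k hk x hx _ hB => (corner m).mul_mem (hA k hk x hx) hB) hr
    fun k hk => hA k (hk.trans_lt hr)

lemma dressingCoeff_mem_leftColumns (hI : IsOpen I) {r : ℕ} (hr : r < s)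
    (hA : ∀ k ≤ r, ∀ x ∈ I, A k x ∈ corner m) :
    ∀ x ∈ I, dressingCoeff A s r x ∈ leftColumns m :=
  dressingCoeff_mem (S := (leftColumns m).toAddSubgroup) (fun _ => matD_mem_leftColumns hI)
    (fun _ _ _ _ _ => Ideal.mul_mem_left _ _) hr
    fun k hk x hx => mem_leftColumns_of_mem_corner (hA k hk x hx)

lemma stepD_dressingCoeff_mul_mixedD (hI : IsOpen I) (hA : ∀ k < s, SmoothMatOn (A k) I)
    (hAc : ∀ k < s, k < M → ∀ x ∈ I, A k x ∈ corner m) (hZ : SmoothMatOn Z I) {r : ℕ}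
    (hr : r ≤ s) {x : ℝ} (hx : x ∈ I) :
    stepD m M s (dressingCoeff A s r * mixedD m M r Z) x =
      matD (dressingCoeff A s r) x * mixedD m M r Z x +
        dressingCoeff A s r x * mixedD m M (r + 1) Z x := by
  obtain rfl | hrs := hr.eq_or_lt
  · rw [dressingCoeff_self, matD_one, one_mul, mixedD_succ, Pi.zero_apply, Pi.one_apply, zero_mul,
      zero_add, one_mul]
  have hstep : stepD m M s (dressingCoeff A s r * mixedD m M r Z) x =
      matD (dressingCoeff A s r * mixedD m M r Z) x := by
    rw [stepD]
    split_ifs with hs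
    · refine matDm_eqOn_matD hI (fun t ht i j hi => ?_) hx
      exact mul_apply_eq_zero_of_mem_corner
        (dressingCoeff_mem_corner hI (fun k hk => hAc k hk (hk.trans hs)) hrs t ht) _ hi j
    · rfl
  have hmul : dressingCoeff A s r x * mixedD m M (r + 1) Z x =
      dressingCoeff A s r x * matD (mixedD m M r Z) x := by
    rw [mixedD_succ, stepD]
    split_ifs with hrM
    · exact mul_matDm_of_mem_leftColumns (dressingCoeff_mem_leftColumns hI hrs
        (fun k hk => hAc k (hk.trans_lt hrs) (hk.trans_lt hrM)) x hx) _ x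
    · rfl
  rw [hstep, hmul, matD_mul hI (smoothMatOn_dressingCoeff hI hA r) (hZ.mixedD hI r) hx]

lemma sum_dressingCoeff_succ_mul (A G : ℕ → ℝ → Matrix (Fin n) (Fin n) ℝ) (s : ℕ) :
    ∑ r ∈ Finset.range (s + 2), dressingCoeff A (s + 1) r * G r =
      ∑ r ∈ Finset.range (s + 1), (dressingCoeff A s r * G (r + 1) +
        (matD (dressingCoeff A s r) - A s * dressingCoeff A s r) * G r) := by
  let H (r : ℕ) := (matD (dressingCoeff A s r) - A s * dressingCoeff A s r) * G r
  have hlast : H (s + 1) = 0 := by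
    simp only [H]
    rw [dressingCoeff_of_lt s.lt_succ_self, mul_zero, sub_zero, matD_zero, zero_mul]
  rw [Finset.sum_add_distrib, ← add_zero (∑ r ∈ Finset.range (s + 1), (matD _ - A s * _) * G r),
    ← hlast, ← Finset.sum_range_succ H, Finset.sum_range_succ', Finset.sum_range_succ' _ (s + 1),
    ← add_assoc, ← Finset.sum_add_distrib]
  simp only [dressingCoeff, add_mul, H]

theorem dressing_eq_sum_mixedD (hI : IsOpen I) (hA : ∀ k < s, SmoothMatOn (A k) I)
    (hAc : ∀ k < s, k < M → ∀ x ∈ I, A k x ∈ corner m) (hZ : SmoothMatOn Z I) :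
    Set.EqOn (dressing m M A s Z)
      (∑ r ∈ Finset.range (s + 1), dressingCoeff A s r * mixedD m M r Z) I := by
  induction s with
  | zero =>
    intro x _
    rw [Finset.sum_range_one, dressingCoeff_self, one_mul, mixedD_zero, dressing]
  | succ s ih =>
    have hA' : ∀ k < s, SmoothMatOn (A k) I := fun k hk => hA k (hk.trans s.lt_succ_self)
    have hAc' : ∀ k < s, k < M → ∀ x ∈ I, A k x ∈ corner m :=
      fun k hk => hAc k (hk.trans s.lt_succ_self)
    have ih := ih hA' hAc'
    intro x hx
    have hstep : stepD m M s (dressing m M A s Z) x = ∑ r ∈ Finset.range (s + 1),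
        (matD (dressingCoeff A s r) x * mixedD m M r Z x +
          dressingCoeff A s r x * mixedD m M (r + 1) Z x) := by
      rw [stepD_eqOn hI s ih hx,
        stepD_sum hI s (fun r _ => (smoothMatOn_dressingCoeff hI hA' r).mul (hZ.mixedD hI r)) hx]
      exact Finset.sum_congr rfl fun r hr =>
        stepD_dressingCoeff_mul_mixedD hI hA' hAc' hZ (Finset.mem_range_succ_iff.mp hr) hx
    rw [dressing, Pi.sub_apply, hstep, Pi.mul_apply, ih hx,
      sum_dressingCoeff_succ_mul A (fun r => mixedD m M r Z), Finset.sum_apply, Finset.sum_apply,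
      Finset.mul_sum, ← Finset.sum_sub_distrib]
    refine Finset.sum_congr rfl fun r _ => ?_
    simp only [Pi.add_apply, Pi.sub_apply, Pi.mul_apply]
    noncomm_ring

end Dressing

/-! ### The Darboux chain -/

/-- The increment `F_{s+1} - F_s = (∂Y_{s+1})Y_{s+1}⁻¹` of the potential, where
`Y_{s+1} = chainM m M U s (U s)`. -/
def stepPotential (m M : ℕ) (U : ℕ → ℝ → Matrix (Fin n) (Fin n) ℝ) (s : ℕ) :
    ℝ → Matrix (Fin n) (Fin n) ℝ :=
  matLogD (chainM m M U s (U s))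

section Chain

variable {m M N s k : ℕ} {U : ℕ → ℝ → Matrix (Fin n) (Fin n) ℝ} {I : Set ℝ}

lemma chainM_eq_dressing (m M : ℕ) (U : ℕ → ℝ → Matrix (Fin n) (Fin n) ℝ) (s : ℕ)
    (Z : ℝ → Matrix (Fin n) (Fin n) ℝ) :
    chainM m M U s Z = dressing m M (stepPotential m M U) s Z := by
  induction s with
  | zero => rfl
  | succ s ih =>
    funext x
    simp only [chainM, LstepM, decide_eq_true_eq, dressing, ← ih, Pi.sub_apply, Pi.mul_apply,
      stepD, stepPotential, matLogD]
    split_ifs <;> rfl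

lemma chainF_eq_sum (m M : ℕ) (U : ℕ → ℝ → Matrix (Fin n) (Fin n) ℝ) (s : ℕ) :
    chainF m M U s = ∑ k ∈ Finset.range s, stepPotential m M U k := by
  induction s with
  | zero => rfl
  | succ s ih =>
    rw [Finset.sum_range_succ, ← ih]
    rfl

lemma smoothMatOn_stepPotential (hI : IsOpen I) (hU : ∀ k ≤ s, SmoothMatOn (U k) I)
    (hY : ∀ k ≤ s, ∀ x ∈ I, (chainM m M U k (U k) x).det ≠ 0) :
    SmoothMatOn (stepPotential m M U s) I := by
  induction s using Nat.strong_induction_on with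
  | _ s ih =>
    refine SmoothMatOn.matLogD hI ?_ (hY s le_rfl)
    rw [chainM_eq_dressing]
    exact (hU s le_rfl).dressing hI fun k hk =>
      ih k hk (fun l hl => hU l (hl.trans hk.le)) fun l hl => hY l (hl.trans hk.le)

lemma stepPotential_mem_corner (hI : IsOpen I) (hs : s < M)
    (hB : ∀ k ≤ s, BlockDiagOn m (U k) I)
    (hY : ∀ k ≤ s, ∀ x ∈ I, (chainM m M U k (U k) x).det ≠ 0) :
    ∀ x ∈ I, stepPotential m M U s x ∈ corner m := by
  induction s using Nat.strong_induction_on with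
  | _ s ih =>
    refine BlockDiagOn.matLogD_mem_corner hI ?_ (hY s le_rfl)
    rw [chainM_eq_dressing]
    exact (hB s le_rfl).dressing hI hs.le fun k hk =>
      ih k hk (hk.trans hs) (fun l hl => hB l (hl.trans hk.le)) fun l hl => hY l (hl.trans hk.le)

lemma chainM_self_apply_eq_zero (hI : IsOpen I) (hks : k < s)
    (hB : ∀ l ≤ k, l < M → BlockDiagOn m (U l) I)
    (hY : ∀ l ≤ k, ∀ x ∈ I, (chainM m M U l (U l) x).det ≠ 0) {j : Fin n}
    (hj : k < M → (j : ℕ) < m) : ∀ x ∈ I, ∀ i, chainM m M U s (U k) x i j = 0 := by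
  rw [chainM_eq_dressing]
  refine dressing_apply_eq_zero_of_le hI hks fun x hx i => ?_
  have hstep : stepD m M k (chainM m M U k (U k)) x i j = matD (chainM m M U k (U k)) x i j := by
    rw [stepD]
    split_ifs with hk
    · refine BlockDiagOn.matDm_apply_eq_matD hI ?_ hx i (hj hk)
      rw [chainM_eq_dressing]
      exact (hB k le_rfl hk).dressing hI hk.le fun l hl => stepPotential_mem_corner hI
        (hl.trans hk) (fun p hp => hB p (hp.trans hl.le) (hp.trans_lt (hl.trans hk)))
        fun p hp => hY p (hp.trans hl.le)
    · rfl
  rw [dressing, ← chainM_eq_dressing, Pi.sub_apply, Pi.mul_apply, Matrix.sub_apply, hstep,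
    stepPotential, matLogD_mul_self (hY k le_rfl x hx), sub_self]

theorem sum_dressingCoeff_mul_Wblock (hI : IsOpen I) (hU : ∀ k < s, SmoothMatOn (U k) I)
    (hB : ∀ k < s, k < M → BlockDiagOn m (U k) I)
    (hY : ∀ k < s, ∀ x ∈ I, (chainM m M U k (U k) x).det ≠ 0) (hks : k < s) {x : ℝ}
    (hx : x ∈ I) :
    ∑ r ∈ Finset.range (s + 1),
      dressingCoeff (stepPotential m M U) s r x * Wblock m M r k (U k) x = 0 := by
  have hA : ∀ l < s, SmoothMatOn (stepPotential m M U l) I := fun l hl =>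
    smoothMatOn_stepPotential hI (fun p hp => hU p (hp.trans_lt hl))
      fun p hp => hY p (hp.trans_lt hl)
  have hAc : ∀ l < s, l < M → ∀ x ∈ I, stepPotential m M U l x ∈ corner m := fun l hl hlM =>
    stepPotential_mem_corner hI hlM (fun p hp => hB p (hp.trans_lt hl) (hp.trans_lt hlM))
      fun p hp => hY p (hp.trans_lt hl)
  ext i j
  rw [Matrix.sum_apply, Matrix.zero_apply]
  by_cases hj : k < M → (j : ℕ) < m
  · have hW (r : ℕ) (l : Fin n) : Wblock m M r k (U k) x l j = mixedD m M r (U k) x l j := by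
      by_cases hk : k < M
      · exact (hB k hks hk).Wblock_apply_eq_mixedD hI hk r hx l (hj hk)
      · rw [Wblock_eq_mixedD (not_lt.mp hk)]
    have hzero := chainM_self_apply_eq_zero hI hks (fun l hl => hB l (hl.trans_lt hks))
      (fun l hl => hY l (hl.trans_lt hks)) hj x hx i
    rw [chainM_eq_dressing, dressing_eq_sum_mixedD hI hA hAc (hU k hks) hx, Finset.sum_apply,
      Matrix.sum_apply] at hzero
    simpa only [Pi.mul_apply, Matrix.mul_apply, hW] using hzero
  · push Not at hj
    refine Finset.sum_eq_zero fun r _ => ?_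
    simp only [Matrix.mul_apply, (hB k hks hj.1).Wblock_apply_of_le hI hj.1 r hx _ hj.2]
    refine Finset.sum_eq_zero fun l _ => ?_
    split_ifs with h
    · obtain ⟨hrk, rfl⟩ := h
      rw [dressingCoeff_mem_leftColumns hI (hrk.trans_lt hks)
        (fun p hp => hAc p (by omega) (by omega)) x hx i l hj.2, zero_mul]
    · rw [mul_zero]

lemma Wrow_eq_Wblock (hk : k < N) (Z : ℝ → Matrix (Fin n) (Fin n) ℝ) (i : Fin n) (x : ℝ) :
    Wrow m M N k Z i x = Wblock m M N k Z x i := by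
  rw [Wrow, Wblock]
  split_ifs <;> first | rfl | omega

lemma WijMat_succ_eq_updateRow (m M N : ℕ) (i j : Fin n)
    (U : ℕ → ℝ → Matrix (Fin n) (Fin n) ℝ) (x : ℝ) :
    WijMat m M (N + 1) i j U x = (Wmat m M (N + 1) U x).updateRow (Fin.last N, j)
      fun q => Wblock m M (N + 1) q.1 (U q.1) x i q.2 := by
  ext p q
  have hp : ((p.1 : ℕ) = N + 1 - 1 ∧ p.2 = j) ↔ p = (Fin.last N, j) := by
    simp [Prod.ext_iff, Fin.ext_iff (a := p.1)]
  simp only [WijMat, Matrix.of_apply, hp, Matrix.updateRow_apply, Wrow_eq_Wblock q.1.2]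
  rfl

lemma Wblock_eq_sum_smul_Wmat (hI : IsOpen I) (hU : ∀ k < N, SmoothMatOn (U k) I)
    (hB : ∀ k < N, k < M → BlockDiagOn m (U k) I)
    (hY : ∀ k < N, ∀ x ∈ I, (chainM m M U k (U k) x).det ≠ 0) {x : ℝ} (hx : x ∈ I)
    (i : Fin n) :
    (fun q : Fin N × Fin n => Wblock m M N q.1 (U q.1) x i q.2) =
      ∑ p : Fin N × Fin n,
        -dressingCoeff (stepPotential m M U) N p.1 x i p.2 • Wmat m M N U x p := by
  funext q
  have h := sum_dressingCoeff_mul_Wblock hI hU hB hY q.1.2 hx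
  rw [Finset.sum_range_succ, dressingCoeff_self, Pi.one_apply, one_mul, add_comm,
    add_eq_zero_iff_eq_neg] at h
  rw [h, Finset.sum_apply, Fintype.sum_prod_type, Finset.sum_range]
  simp only [Matrix.neg_apply, Matrix.sum_apply, Matrix.mul_apply, Pi.smul_apply, smul_eq_mul,
    neg_mul, Finset.sum_neg_distrib]
  rfl

end Chain

theorem transformed_potential_formula_general {m M N : ℕ} (hN : 0 < N)
    {U : ℕ → ℝ → Matrix (Fin n) (Fin n) ℝ} {I : Set ℝ} (hI : IsOpen I)
    (hU : ∀ k < N, SmoothMatOn (U k) I) (hB : ∀ k < N, k < M → BlockDiagOn m (U k) I)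
    (hY : ∀ k < N, ∀ x ∈ I, (chainM m M U k (U k) x).det ≠ 0) {x : ℝ} (hx : x ∈ I)
    (i j : Fin n) :
    (WijMat m M N i j U x).det = chainF m M U N x i j * (Wmat m M N U x).det := by
  obtain ⟨N, rfl⟩ := Nat.exists_eq_succ_of_ne_zero hN.ne'
  rw [WijMat_succ_eq_updateRow, Wblock_eq_sum_smul_Wmat hI hU hB hY hx i,
    Matrix.det_updateRow_sum, smul_eq_mul, Fin.val_last, dressingCoeff_succ_self,
    ← chainF_eq_sum, Pi.neg_apply, Matrix.neg_apply, neg_neg]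

/-- Theorem 2 of the paper: the entries of the matrix `F_N` defined by the recursion
`F_0 = 0`, `F_k = F_{k-1} + (∂Y_k)Y_k⁻¹`, are given by
`f^N_{ij} = det W_{i,j}(U₁,…,U_M;U_{M+1},…,U_N) / det W(U₁,…,U_M;U_{M+1},…,U_N)`. -/
theorem transformed_potential_formula {n : ℕ} (m M N : ℕ)
    (hm : 1 ≤ m) (hmn : m < n) (hM : 1 ≤ M) (hMN : M ≤ N)
    (U : ℕ → ℝ → Matrix (Fin n) (Fin n) ℝ)
    (hUsmooth : ∀ k < N, SmoothMat (U k)) (hUblk : ∀ k < M, BlockDiag m (U k))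
    (a b : ℝ)
    (hYinv : ∀ s < N, ∀ x ∈ Set.Ioo a b, (chainM m M U s (U s) x).det ≠ 0)
    (hdet : ∀ x ∈ Set.Ioo a b, (Wmat m M N U x).det ≠ 0) :
    ∀ x ∈ Set.Ioo a b, ∀ i j : Fin n,
      chainF m M U N x i j =
        (WijMat m M N i j U x).det / (Wmat m M N U x).det := by
  intro x hx i j
  rw [eq_div_iff (hdet x hx)]
  exact (transformed_potential_formula_general (hM.trans hMN) isOpen_Ioo
    (fun k hk => (hUsmooth k hk).smoothMatOn) (fun k _ hk => (hUblk k hk).blockDiagOn)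
    hYinv hx i j).symm

end SingularDarboux
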